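/- arXiv:1710.10892 — 3 statements merged into one kernel-verified Lean document; each statement's English description precedes it below -/
import Mathlib

section
/- Let s = (s_1,…,s_n) be a sequence of positive integers and let k ≥ 1. For e ∈ I_n^(s), define λ(e) ∈ ℤ^{n+1} by λ(e)_j = ℓ_j·s_j − e_j for 1 ≤ j ≤ n, where ℓ_j = #(Asc(e) ∩ {0,1,…,j−1}), and λ(e)_{n+1} = asc(e). If f ∈ I_{n,k−1}^(s), g ∈ I_{n,1}^(s), and the componentwise-mod-s sum f + g lies in I_{n,k}^(s), then λ(f + g) = λ(f) + λ(g) in ℤ^{n+1}. -/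
open scoped BigOperators

noncomputable section

/-- The `s`-lecture hall polytope
`P_n^(s) = { x ∈ ℝ^n : 0 ≤ x_1/s_1 ≤ x_2/s_2 ≤ ⋯ ≤ x_n/s_n ≤ 1 }` (indices 0-based in Lean). -/
def lhp (n : ℕ) (s : Fin n → ℤ) : Set (Fin n → ℝ) :=
  {x | (∀ i : Fin n, (i : ℕ) = 0 → 0 ≤ x i / (s i : ℝ)) ∧
       (∀ i j : Fin n, (j : ℕ) = (i : ℕ) + 1 → x i / (s i : ℝ) ≤ x j / (s j : ℝ)) ∧
       (∀ i : Fin n, (i : ℕ) = n - 1 → x i / (s i : ℝ) ≤ 1)}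

/-- The vertex `(0,…,0,s_i,s_{i+1},…,s_n)` of the lecture hall polytope (real version). -/
def lhpVertexR (n : ℕ) (s : Fin n → ℤ) (i : Fin n) : Fin n → ℝ :=
  fun j => if i ≤ j then (s j : ℝ) else 0

/-- The vertex `(0,…,0,s_i,s_{i+1},…,s_n)` of the lecture hall polytope (integer version). -/
def lhpVertexZ (n : ℕ) (s : Fin n → ℤ) (i : Fin n) : Fin n → ℤ :=
  fun j => if i ≤ j then s j else 0

/-- `cone(P_n^(s)) = span_{ℝ≥0} { (v,1) : v a vertex of P_n^(s) } ⊆ ℝ^{n+1}`: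
the set of nonnegative combinations of `(0,1)` and the `(v_i,1)`. -/
def lhpCone (n : ℕ) (s : Fin n → ℤ) : Set (Fin (n + 1) → ℝ) :=
  {x | ∃ (a : ℝ) (b : Fin n → ℝ), 0 ≤ a ∧ (∀ i, 0 ≤ b i) ∧
      x = a • (Fin.snoc (0 : Fin n → ℝ) 1 : Fin (n + 1) → ℝ) +
        ∑ i : Fin n, b i • (Fin.snoc (lhpVertexR n s i) 1 : Fin (n + 1) → ℝ)}

/-- Lattice points of `cone(P_n^(s))`. -/
def lhpConeZ (n : ℕ) (s : Fin n → ℤ) : Set (Fin (n + 1) → ℤ) :=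
  {x | (fun i => (x i : ℝ)) ∈ lhpCone n s}

/-- Lattice points of the (relative) interior of `cone(P_n^(s))`
(the cone is full-dimensional, so the relative interior is the interior). -/
def lhpConeInteriorZ (n : ℕ) (s : Fin n → ℤ) : Set (Fin (n + 1) → ℤ) :=
  {x | (fun i => (x i : ℝ)) ∈ interior (lhpCone n s)}

/-- `P_n^(s)` is Gorenstein: some integer point `c` satisfies
`c + (cone(P) ∩ ℤ^{n+1}) = cone(P)° ∩ ℤ^{n+1}`. -/
def IsGorenstein (n : ℕ) (s : Fin n → ℤ) : Prop :=
  ∃ c : Fin (n + 1) → ℤ,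
    (fun x => c + x) '' lhpConeZ n s = lhpConeInteriorZ n s

/-- `P_n^(s)` is level: finitely many integer points `c_1,…,c_m`, all with the same
last coordinate, satisfy `⋃ (c_i + (cone(P) ∩ ℤ^{n+1})) = cone(P)° ∩ ℤ^{n+1}`. -/
def IsLevel (n : ℕ) (s : Fin n → ℤ) : Prop :=
  ∃ C : Finset (Fin (n + 1) → ℤ), C.Nonempty ∧
    (∀ c ∈ C, ∀ c' ∈ C, c (Fin.last n) = c' (Fin.last n)) ∧
    (⋃ c ∈ C, (fun x => c + x) '' lhpConeZ n s) = lhpConeInteriorZ n s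

/-- The `t`-lecture hall cone `C_m^(t) = { x ∈ ℝ^m : 0 ≤ x_1/t_1 ≤ ⋯ ≤ x_m/t_m }`. -/
def lhCone (m : ℕ) (t : Fin m → ℤ) : Set (Fin m → ℝ) :=
  {x | (∀ i : Fin m, (i : ℕ) = 0 → 0 ≤ x i / (t i : ℝ)) ∧
       (∀ i j : Fin m, (j : ℕ) = (i : ℕ) + 1 → x i / (t i : ℝ) ≤ x j / (t j : ℝ))}

/-- `e` is an `s`-inversion sequence: `0 ≤ e_i < s_i` for all `i`. -/
def IsInvSeq (n : ℕ) (s : Fin n → ℤ) (e : Fin n → ℤ) : Prop :=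
  ∀ i, 0 ≤ e i ∧ e i < s i

/-- The ratio `e_i / s_i` as a rational number. -/
def invRatio (n : ℕ) (s e : Fin n → ℤ) (i : Fin n) : ℚ := (e i : ℚ) / (s i : ℚ)

/-- The ratio `e_{i-1}/s_{i-1}`, with the convention `e_0 = 0`, `s_0 = 1`
(paper 1-based indexing; here 0-based). -/
def prevRatio (n : ℕ) (s e : Fin n → ℤ) (i : Fin n) : ℚ :=
  if (i : ℕ) = 0 then 0
  else invRatio n s e ⟨(i : ℕ) - 1, lt_of_le_of_lt (Nat.sub_le _ _) i.isLt⟩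

/-- The ascent set `Asc(e) ⊆ {0,…,n-1}` of an inversion sequence. -/
def ascSet (n : ℕ) (s e : Fin n → ℤ) : Finset (Fin n) :=
  Finset.univ.filter fun i => prevRatio n s e i < invRatio n s e i

/-- The number of ascents of an inversion sequence. -/
def asc (n : ℕ) (s e : Fin n → ℤ) : ℕ := (ascSet n s e).card

/-- Addition of inversion sequences: componentwise mod `s_i`,
with representative in `{0,…,s_i - 1}`. -/
def invAdd (n : ℕ) (s : Fin n → ℤ) (e e' : Fin n → ℤ) : Fin n → ℤ :=
  fun i => (e i + e' i) % s i

/-- `hStar n s k = # I_{n,k}^(s)`, the number of `s`-inversion sequences with `k` ascents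
(the `k`-th coefficient of the `s`-Eulerian polynomial). -/
def hStar (n : ℕ) (s : Fin n → ℤ) (k : ℕ) : ℕ :=
  Nat.card {e : Fin n → ℤ // IsInvSeq n s e ∧ asc n s e = k}

/-- `s` is `u`-generated by a sequence `u` of positive integers:
`s_2 = u_1 s_1 - 1` and `s_{i+1} = u_i s_i - s_{i-1}` for `i > 1`. -/
def IsUGenerated (n : ℕ) (s : Fin n → ℤ) : Prop :=
  ∃ u : Fin n → ℤ,
    (∀ i : Fin n, (i : ℕ) < n - 1 → 0 < u i) ∧
    (∀ k j : Fin n, (j : ℕ) = (k : ℕ) + 1 → (k : ℕ) = 0 → s j = u k * s k - 1) ∧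
    (∀ a k j : Fin n, (k : ℕ) = (a : ℕ) + 1 → (j : ℕ) = (k : ℕ) + 1 →
      s j = u k * s k - s a)

/-- The (half-open) fundamental parallelepiped
`Π = { Σ η_i (v_i,1) : 0 ≤ η_i < 1 }` of `P_n^(s)`. -/
def fpp (n : ℕ) (s : Fin n → ℤ) : Set (Fin (n + 1) → ℝ) :=
  {x | ∃ (a : ℝ) (b : Fin n → ℝ),
      (0 ≤ a ∧ a < 1) ∧ (∀ i, 0 ≤ b i ∧ b i < 1) ∧
      x = a • (Fin.snoc (0 : Fin n → ℝ) 1 : Fin (n + 1) → ℝ) +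
        ∑ i : Fin n, b i • (Fin.snoc (lhpVertexR n s i) 1 : Fin (n + 1) → ℝ)}

/-- The lattice point `λ(e) ∈ ℤ^{n+1}` associated to an inversion sequence `e`:
`λ(e)_j = ℓ_j s_j - e_j` with `ℓ_j = #(Asc(e) ∩ {0,…,j-1})` (paper 1-based `j`),
and last coordinate `asc(e)`. -/
def lamOf (n : ℕ) (s : Fin n → ℤ) (e : Fin n → ℤ) : Fin (n + 1) → ℤ :=
  Fin.snoc
    (fun j : Fin n =>
      (((ascSet n s e).filter fun i : Fin n => (i : ℕ) ≤ (j : ℕ)).card : ℤ) * s j - e j)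
    (asc n s e : ℤ)

/-- A coefficient sequence `h` (of a polynomial `Σ h_j z^j` of degree `r`) is palindromic:
`h_r ≠ 0`, `h_k = 0` for `k > r`, and `h_j = h_{r-j}` for `0 ≤ j ≤ r`. -/
def IsPalindromic (h : ℕ → ℕ) : Prop :=
  ∃ r : ℕ, h r ≠ 0 ∧ (∀ k, r < k → h k = 0) ∧ ∀ j, j ≤ r → h j = h (r - j)

end

/-!
Put `r_m = e_m / s_m` for `0 ≤ m ≤ n`, so that `r_0 = 0`, and `x_m = ℓ_m - r_m`, which is
`λ(e)_m / s_m` for `1 ≤ m`. Since all `r_m` lie in `[0, 1)`, the increment `x_{m+1} - x_m` is the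
fractional part of `r_m - r_{m+1}`. As `r(f + g)` is the fractional part of `r(f) + r(g)` and
fractional parts are subadditive, `x(f) + x(g) - x(f + g)` is nondecreasing in `m`. It starts at
`0`, and at `m = n` it equals `asc f + asc g - asc (f + g)` minus the nonnegative integer
`⌊r_n(f) + r_n(g)⌋`. So if ascents add up, it vanishes identically.
-/

section Fractions

variable {R : Type*} [Ring R] [LinearOrder R] [IsStrictOrderedRing R] [FloorRing R]

theorem fract_le_self {a : R} (ha : 0 ≤ a) : Int.fract a ≤ a :=
  sub_le_self a (Int.cast_nonneg (Int.floor_nonneg.2 ha))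

theorem fract_sub_eq_ite_add_sub {a b : R} (ha : a ∈ Set.Ico 0 1) (hb : b ∈ Set.Ico 0 1) :
    Int.fract (a - b) = (if a < b then 1 else 0) + (a - b) := by
  split_ifs with hab
  · have hgt : -1 < a - b := by
      simpa using add_lt_add_of_le_of_lt ha.1 (neg_lt_neg hb.2)
    refine Int.fract_eq_iff.2 ⟨(neg_lt_iff_pos_add'.1 hgt).le, ?_, -1, by simp⟩
    exact add_lt_of_neg_right 1 (sub_neg.2 hab)
  · have hlt : a - b < 1 := (sub_le_self a hb.1).trans_lt ha.2
    rw [zero_add, Int.fract_eq_self]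
    exact ⟨sub_nonneg.2 (not_lt.1 hab), hlt⟩

theorem fract_fract_sub_fract (a b : R) :
    Int.fract (Int.fract a - Int.fract b) = Int.fract (a - b) :=
  Int.fract_eq_fract.2 ⟨⌊b⌋ - ⌊a⌋, by push_cast [Int.fract]; abel⟩

theorem intCast_emod_div {K : Type*} [Field K] [LinearOrder K] [IsStrictOrderedRing K]
    [FloorRing K] {m : ℤ} (hm : 0 ≤ m) (a : ℤ) :
    ((a % m : ℤ) : K) / m = Int.fract ((a : K) / m) := by
  lift m to ℕ using hm
  exact_mod_cast (Int.fract_div_intCast_eq_div_intCast_mod (k := K)).symm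

end Fractions

theorem card_filter_castSucc_lt_succ {n : ℕ} (A : Finset (Fin n)) (i : Fin n) :
    (A.filter fun j => j.castSucc < i.succ).card =
      (A.filter fun j => j.castSucc < i.castSucc).card + if i ∈ A then 1 else 0 := by
  have hsplit : ∀ j : Fin n, j.castSucc < i.succ ↔ j.castSucc < i.castSucc ∨ j = i := fun j => by
    rw [Fin.castSucc_lt_succ_iff, Fin.castSucc_lt_castSucc_iff, le_iff_lt_or_eq]
  have hdisj : Disjoint (A.filter fun j => j.castSucc < i.castSucc) (A.filter (· = i)) :=
    Finset.disjoint_filter.2 fun j _ hlt hji => hlt.ne (congrArg Fin.castSucc hji)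
  simp only [hsplit]
  rw [Finset.filter_or, Finset.card_union_of_disjoint hdisj, Finset.filter_eq']
  split_ifs <;> rfl

section Ratios

variable {n : ℕ} {s : Fin n → ℤ}

/-- The ratios `e_m / s_m` for `0 ≤ m ≤ n`, with the convention `e_0 / s_0 = 0` built in. -/
def extRatio (n : ℕ) (s e : Fin n → ℤ) : Fin (n + 1) → ℚ :=
  Fin.cons 0 (invRatio n s e)

/-- The number `ℓ_m = #(Asc(e) ∩ {0, …, m - 1})` of ascents before position `m`, for
`0 ≤ m ≤ n`. -/
def ascCount (n : ℕ) (s e : Fin n → ℤ) (m : Fin (n + 1)) : ℕ :=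
  ((ascSet n s e).filter fun i => i.castSucc < m).card

/-- The ratio `λ(e)_m / s_m = ℓ_m - e_m / s_m` for `0 ≤ m ≤ n`, where the value at `m = 0` is `0`
by the convention on `e_0 / s_0`. -/
def lamRatio (n : ℕ) (s e : Fin n → ℤ) (m : Fin (n + 1)) : ℚ :=
  ascCount n s e m - extRatio n s e m

theorem prevRatio_eq_extRatio (s e : Fin n → ℤ) (i : Fin n) :
    prevRatio n s e i = extRatio n s e i.castSucc := by
  obtain ⟨_ | i, hi⟩ := i <;> rfl

theorem mem_ascSet_iff (s e : Fin n → ℤ) (i : Fin n) :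
    i ∈ ascSet n s e ↔ extRatio n s e i.castSucc < extRatio n s e i.succ := by
  rw [ascSet, Finset.mem_filter_univ, prevRatio_eq_extRatio]
  rfl

theorem IsInvSeq.pos {e : Fin n → ℤ} (he : IsInvSeq n s e) (i : Fin n) : 0 < s i :=
  (he i).1.trans_lt (he i).2

theorem isInvSeq_invAdd (hs : ∀ i, 0 < s i) (f g : Fin n → ℤ) :
    IsInvSeq n s (invAdd n s f g) := fun i =>
  ⟨Int.emod_nonneg _ (hs i).ne', Int.emod_lt_of_pos _ (hs i)⟩

theorem extRatio_mem_Ico {e : Fin n → ℤ} (he : IsInvSeq n s e) (m : Fin (n + 1)) :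
    extRatio n s e m ∈ Set.Ico 0 1 := by
  cases m using Fin.cases with
  | zero => exact ⟨le_rfl, zero_lt_one⟩
  | succ i =>
    have hsi : (0 : ℚ) < s i := Int.cast_pos.2 (he.pos i)
    exact ⟨div_nonneg (Int.cast_nonneg (he i).1) hsi.le,
      (div_lt_one hsi).2 (Int.cast_lt.2 (he i).2)⟩

theorem extRatio_invAdd (hs : ∀ i, 0 ≤ s i) (f g : Fin n → ℤ) (m : Fin (n + 1)) :
    extRatio n s (invAdd n s f g) m = Int.fract (extRatio n s f m + extRatio n s g m) := by
  cases m using Fin.cases with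
  | zero => simp [extRatio]
  | succ i =>
    calc
      ((((f i + g i) % s i : ℤ) : ℚ) / s i) = Int.fract (((f i + g i : ℤ) : ℚ) / s i) :=
        intCast_emod_div (hs i) _
      _ = Int.fract ((f i : ℚ) / s i + g i / s i) := by rw [Int.cast_add, add_div]

theorem ascCount_succ (s e : Fin n → ℤ) (i : Fin n) :
    ascCount n s e i.succ = ascCount n s e i.castSucc +
      if extRatio n s e i.castSucc < extRatio n s e i.succ then 1 else 0 := by
  simp only [ascCount, card_filter_castSucc_lt_succ, mem_ascSet_iff]

theorem ascCount_last (s e : Fin n → ℤ) : ascCount n s e (Fin.last n) = asc n s e := by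
  rw [ascCount, asc, Finset.filter_true_of_mem fun i _ => i.castSucc_lt_last]

theorem lamRatio_zero (s e : Fin n → ℤ) : lamRatio n s e 0 = 0 := by
  simp [lamRatio, ascCount, extRatio]

theorem lamRatio_last (s e : Fin n → ℤ) :
    lamRatio n s e (Fin.last n) = asc n s e - extRatio n s e (Fin.last n) := by
  rw [lamRatio, ascCount_last]

theorem lamRatio_succ {e : Fin n → ℤ} (he : IsInvSeq n s e) (i : Fin n) :
    lamRatio n s e i.succ = lamRatio n s e i.castSucc +
      Int.fract (extRatio n s e i.castSucc - extRatio n s e i.succ) := by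
  rw [fract_sub_eq_ite_add_sub (extRatio_mem_Ico he _) (extRatio_mem_Ico he _), lamRatio, lamRatio,
    ascCount_succ]
  push_cast
  ring

theorem lamOf_last (s e : Fin n → ℤ) : lamOf n s e (Fin.last n) = asc n s e :=
  Fin.snoc_last _ _

theorem cast_lamOf_castSucc (e : Fin n → ℤ) {j : Fin n} (hj : s j ≠ 0) :
    (lamOf n s e j.castSucc : ℚ) = lamRatio n s e j.succ * s j := by
  have hsj : (s j : ℚ) ≠ 0 := Int.cast_ne_zero.2 hj
  have hlam : lamOf n s e j.castSucc = ascCount n s e j.succ * s j - e j := by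
    simp only [lamOf, Fin.snoc_castSucc, ascCount, Fin.castSucc_lt_succ_iff, Fin.le_def]
  have hratio : extRatio n s e j.succ * s j = e j := div_mul_cancel₀ _ hsj
  rw [hlam, lamRatio, sub_mul, hratio]
  push_cast
  rfl

end Ratios

section Addition

variable {n : ℕ} {s f g : Fin n → ℤ}

theorem fract_extRatio_invAdd_sub_le (hs : ∀ i, 0 ≤ s i) (f g : Fin n → ℤ) (l m : Fin (n + 1)) :
    Int.fract (extRatio n s (invAdd n s f g) l - extRatio n s (invAdd n s f g) m) ≤
      Int.fract (extRatio n s f l - extRatio n s f m) +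
        Int.fract (extRatio n s g l - extRatio n s g m) := by
  rw [extRatio_invAdd hs, extRatio_invAdd hs, fract_fract_sub_fract, add_sub_add_comm]
  exact Int.fract_add_le _ _

theorem monotone_lamRatio_add_sub (hf : IsInvSeq n s f) (hg : IsInvSeq n s g) :
    Monotone (lamRatio n s f + lamRatio n s g - lamRatio n s (invAdd n s f g)) := by
  refine Fin.monotone_iff_le_succ.2 fun i => ?_
  have hfract := fract_extRatio_invAdd_sub_le (fun j => (hf.pos j).le) f g i.castSucc i.succ
  simp only [Pi.sub_apply, Pi.add_apply, lamRatio_succ hf, lamRatio_succ hg,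
    lamRatio_succ (isInvSeq_invAdd hf.pos f g)]
  linarith

theorem lamRatio_last_add_le (hf : IsInvSeq n s f) (hg : IsInvSeq n s g)
    (hasc : asc n s (invAdd n s f g) = asc n s f + asc n s g) :
    lamRatio n s f (Fin.last n) + lamRatio n s g (Fin.last n) ≤
      lamRatio n s (invAdd n s f g) (Fin.last n) := by
  have hfract : extRatio n s (invAdd n s f g) (Fin.last n) ≤
      extRatio n s f (Fin.last n) + extRatio n s g (Fin.last n) := by
    rw [extRatio_invAdd fun i => (hf.pos i).le]
    exact fract_le_self (add_nonneg (extRatio_mem_Ico hf _).1 (extRatio_mem_Ico hg _).1)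
  rw [lamRatio_last, lamRatio_last, lamRatio_last, hasc]
  push_cast
  linarith

theorem lamRatio_invAdd (hf : IsInvSeq n s f) (hg : IsInvSeq n s g)
    (hasc : asc n s (invAdd n s f g) = asc n s f + asc n s g) :
    lamRatio n s (invAdd n s f g) = lamRatio n s f + lamRatio n s g := by
  have hmono := monotone_lamRatio_add_sub hf hg
  funext m
  have hzero := hmono (Fin.zero_le m)
  have hlast := hmono (Fin.le_last m)
  simp only [Pi.sub_apply, Pi.add_apply, lamRatio_zero] at hzero hlast ⊢
  linarith [lamRatio_last_add_le hf hg hasc]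

end Addition

theorem lamOf_add_general {n : ℕ} {s f g : Fin n → ℤ} (hf : IsInvSeq n s f) (hg : IsInvSeq n s g) :
    lamOf n s (invAdd n s f g) = lamOf n s f + lamOf n s g ↔
      asc n s (invAdd n s f g) = asc n s f + asc n s g := by
  constructor
  · intro hlam
    have hlast := congrFun hlam (Fin.last n)
    simp only [Pi.add_apply, lamOf_last] at hlast
    exact_mod_cast hlast
  · intro hasc
    funext j
    rw [Pi.add_apply]
    cases j using Fin.lastCases with
    | last => simp only [lamOf_last, hasc, Nat.cast_add]
    | cast j =>
      have hsj : s j ≠ 0 := (hf.pos j).ne'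
      rw [← Int.cast_inj (α := ℚ), Int.cast_add, cast_lamOf_castSucc _ hsj,
        cast_lamOf_castSucc _ hsj, cast_lamOf_castSucc _ hsj, lamRatio_invAdd hf hg hasc,
        Pi.add_apply, add_mul]

theorem lamOf_add (n : ℕ) (s : Fin n → ℤ) (hs : ∀ i, 0 < s i)
    (k : ℕ) (hk : 1 ≤ k) (f g : Fin n → ℤ)
    (hf : IsInvSeq n s f) (hg : IsInvSeq n s g)
    (hfk : asc n s f = k - 1) (hg1 : asc n s g = 1)
    (hsum : asc n s (invAdd n s f g) = k) :
    lamOf n s (invAdd n s f g) = lamOf n s f + lamOf n s g :=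
  (lamOf_add_general hf hg).2 (by omega)
end

section
/- Let s = (s_1,…,s_n) be a sequence of positive integers such that the s-lecture hall polytope P_n^(s) is level, and for each k ≥ 0 let h_k = #I_{n,k}^(s) (so h_0 = 1). Then h_i ≤ h_j·h_{i+j} for all pairs of indices i, j with h_{i+j} > 0. -/
open scoped BigOperators

/-!
The lattice points of the half-open fundamental parallelepiped `Π` at height `k` correspond to the
inversion sequences with `k` ascents, via `x_i = ℓ_i s_i - e_i` with `ℓ_i` counting ascents, so
`h_k` is the number of these points. Let `v` be the sum of the ray generators. If `x ∈ Π`, then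
`v - x` is interior to the cone, and levelness writes it as `c + z` with `z` in the cone and `c`
an interior point of fixed height. Hence `x + z = v - c` lies in `Π` at a height `r` which does
not depend on `x`, so every `x ∈ Π` of height `i` is completed to height `r` by a cone point `z`.
If `h_{i+j} > 0`, then `i + j ≤ r`, and capping the ratios `z_k/s_k` at `j` gives a point `f` of
height `j` with `f, x + f ∈ Π`. The map `x ↦ (f, x + f)` is injective, which is the inequality.
-/

namespace LectureHall

open Set

section Gaps

variable {N : ℕ} (t : Fin N → ℤ)

/-- The ratio sequence `0, x_1/t_1, …, x_N/t_N`, whose leading `0` is the convention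
`x_0/t_0 = 0` of the lecture hall inequalities. -/
noncomputable def ratio (x : Fin N → ℝ) : Fin (N + 1) → ℝ :=
  Fin.cons 0 fun i => x i / t i

@[simp] lemma ratio_zero (x : Fin N → ℝ) : ratio t x 0 = 0 := rfl

@[simp] lemma ratio_succ (x : Fin N → ℝ) (i : Fin N) : ratio t x i.succ = x i / t i := rfl

lemma ratio_add (x y : Fin N → ℝ) : ratio t (x + y) = ratio t x + ratio t y := by
  funext m
  cases m using Fin.cases <;> simp [add_div]

lemma ratio_smul (c : ℝ) (x : Fin N → ℝ) : ratio t (c • x) = c • ratio t x := by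
  funext m
  cases m using Fin.cases <;> simp [mul_div_assoc]

/-- The map sending `x` to the differences `x_i/t_i - x_{i-1}/t_{i-1}`. These are the coordinates
of `x` in the basis of vertices `(0,…,0,t_i,…,t_N)`, see `gap_eq_iff`. -/
noncomputable def gap : (Fin N → ℝ) →ₗ[ℝ] (Fin N → ℝ) where
  toFun x i := ratio t x i.succ - ratio t x i.castSucc
  map_add' x y := by
    funext i
    simp only [ratio_add, Pi.add_apply]
    ring
  map_smul' c x := by
    funext i
    simp only [ratio_smul, Pi.smul_apply, smul_eq_mul, RingHom.id_apply]
    ring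

lemma gap_apply (x : Fin N → ℝ) (i : Fin N) :
    gap t x i = ratio t x i.succ - ratio t x i.castSucc := rfl

lemma monotone_ratio_iff {x : Fin N → ℝ} : Monotone (ratio t x) ↔ 0 ≤ gap t x := by
  simp only [Fin.monotone_iff_le_succ, Pi.le_def, Pi.zero_apply, gap_apply, sub_nonneg]

variable {t}

lemma ratio_lhpVertexR (ht : ∀ i, 0 < t i) (i : Fin N) (m : Fin (N + 1)) :
    ratio t (lhpVertexR N t i) m = if i.castSucc < m then 1 else 0 := by
  cases m using Fin.cases with
  | zero => simp
  | succ j =>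
    have htj : (t j : ℝ) ≠ 0 := mod_cast (ht j).ne'
    simp [lhpVertexR, Fin.castSucc_lt_succ_iff, ite_div, htj]

lemma gap_lhpVertexR (ht : ∀ i, 0 < t i) (i : Fin N) :
    gap t (lhpVertexR N t i) = Pi.single i 1 := by
  funext j
  rw [gap_apply, ratio_lhpVertexR ht, ratio_lhpVertexR ht, Pi.single_apply]
  grind

lemma gap_comp_linearCombination (ht : ∀ i, 0 < t i) :
    gap t ∘ₗ Fintype.linearCombination ℝ (lhpVertexR N t) = LinearMap.id := by
  ext i : 2
  simp [Fintype.linearCombination_apply_single, gap_lhpVertexR ht]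

lemma gap_eq_iff (ht : ∀ i, 0 < t i) {x b : Fin N → ℝ} :
    gap t x = b ↔ x = ∑ i, b i • lhpVertexR N t i := by
  have hright := gap_comp_linearCombination ht
  have hleft := (LinearMap.comp_eq_id_comm _ _).1 hright
  rw [← Fintype.linearCombination_apply]
  constructor
  · rintro rfl
    exact (LinearMap.congr_fun hleft x).symm
  · rintro rfl
    exact LinearMap.congr_fun hright b

lemma gap_surjective (ht : ∀ i, 0 < t i) : Function.Surjective (gap t) :=
  fun _ => ⟨_, (gap_eq_iff ht).2 rfl⟩

lemma interior_nonneg_gap (ht : ∀ i, 0 < t i) :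
    interior {x | 0 ≤ gap t x} = {x | ∀ i, 0 < gap t x i} := by
  have hopen := (gap t).isOpenMap_of_finiteDimensional (gap_surjective ht)
  have hcont := (gap t).continuous_of_finiteDimensional
  calc interior {x | 0 ≤ gap t x} = gap t ⁻¹' interior (Ici 0) :=
        (hopen.preimage_interior_eq_interior_preimage hcont (Ici 0)).symm
    _ = {x | ∀ i, 0 < gap t x i} := by
        rw [← pi_univ_Ici, interior_pi_set finite_univ]
        ext x
        simp

end Gaps

section Lattice

variable {N : ℕ} (t : Fin N → ℤ)

/-- The restriction of `gap t` to the lattice `ℤ^N`. -/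
noncomputable def latticeGap : (Fin N → ℤ) →+ (Fin N → ℝ) :=
  (gap t).toAddMonoidHom.comp ((Int.castAddHom ℝ).compLeft (Fin N))

lemma latticeGap_eq (x : Fin N → ℤ) : latticeGap t x = gap t fun i => (x i : ℝ) := rfl

/-- The lattice points `∑ η_i v_i` with `0 ≤ η_i < 1` of the half-open parallelepiped spanned by
the vertices `v_i = (0,…,0,t_i,…,t_N)`. -/
def box : Set (Fin N → ℤ) := {x | 0 ≤ latticeGap t x ∧ ∀ i, latticeGap t x i < 1}

variable {t}

lemma mem_box_of_le {x y : Fin N → ℤ} (hy : y ∈ box t) (hx : 0 ≤ latticeGap t x)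
    (hxy : latticeGap t x ≤ latticeGap t y) : x ∈ box t :=
  ⟨hx, fun i => (hxy i).trans_lt (hy.2 i)⟩

lemma latticeGap_sum_lhpVertexZ (ht : ∀ i, 0 < t i) :
    latticeGap t (∑ i, lhpVertexZ N t i) = 1 := by
  have hcast (i : Fin N) : (fun j => (lhpVertexZ N t i j : ℝ)) = lhpVertexR N t i := by
    funext j
    simp [lhpVertexZ, lhpVertexR]
  simp only [map_sum, latticeGap_eq, hcast, gap_lhpVertexR ht]
  exact Finset.univ_sum_single 1

variable (t) in
/-- The truncation of `z` that caps each ratio `z_i/t_i` at `j`. -/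
def truncate (j : ℕ) (z : Fin N → ℤ) : Fin N → ℤ := fun i => min (z i) (j * t i)

lemma ratio_truncate (ht : ∀ i, 0 < t i) (j : ℕ) (z : Fin N → ℤ) (m : Fin (N + 1)) :
    ratio t (fun i => (truncate t j z i : ℝ)) m = min (ratio t (fun i => (z i : ℝ)) m) j := by
  cases m using Fin.cases with
  | zero => simp
  | succ i =>
    have hti : (0 : ℝ) < t i := mod_cast ht i
    simp [truncate, ← min_div_div_right hti.le, hti.ne']

lemma latticeGap_truncate_nonneg (ht : ∀ i, 0 < t i) (j : ℕ) {z : Fin N → ℤ}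
    (hz : 0 ≤ latticeGap t z) : 0 ≤ latticeGap t (truncate t j z) := by
  rw [latticeGap_eq, ← monotone_ratio_iff] at hz ⊢
  intro a b hab
  simpa only [ratio_truncate ht] using min_le_min_right _ (hz hab)

lemma latticeGap_truncate_le (ht : ∀ i, 0 < t i) (j : ℕ) {z : Fin N → ℤ}
    (hz : 0 ≤ latticeGap t z) : latticeGap t (truncate t j z) ≤ latticeGap t z := by
  intro i
  have hi := hz i
  simp only [latticeGap_eq, gap_apply, ratio_truncate ht, Pi.zero_apply] at hi ⊢
  grind

end Lattice

section InversionSequences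

variable {N : ℕ} {t e : Fin N → ℤ}

lemma mem_ascSet_iff (i : Fin N) :
    i ∈ ascSet N t e ↔
      ratio t (fun k => (e k : ℝ)) i.castSucc < ratio t (fun k => (e k : ℝ)) i.succ := by
  have hprev : ((prevRatio N t e i : ℚ) : ℝ) = ratio t (fun k => (e k : ℝ)) i.castSucc := by
    obtain ⟨_ | k, hk⟩ := i
    · simp [prevRatio]
    · rw [show (⟨k + 1, hk⟩ : Fin N).castSucc = (⟨k, by omega⟩ : Fin N).succ from rfl, ratio_succ]
      simp [prevRatio, invRatio]
  rw [ascSet, Finset.mem_filter_univ, ← Rat.cast_lt (K := ℝ), hprev]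
  simp [invRatio]

lemma ratio_mem_Ico (he : IsInvSeq N t e) (m : Fin (N + 1)) :
    ratio t (fun k => (e k : ℝ)) m ∈ Ico 0 1 := by
  cases m using Fin.cases with
  | zero => simp
  | succ i =>
    have hnonneg : (0 : ℝ) ≤ e i := mod_cast (he i).1
    have hlt : (e i : ℝ) < t i := mod_cast (he i).2
    exact ⟨div_nonneg hnonneg (hnonneg.trans hlt.le),
      (div_lt_one (hnonneg.trans_lt hlt)).2 hlt⟩

variable (t e) in
/-- The number of ascents of `e` preceding position `m`, where `Fin (N + 1)` indexes the terms of
`ratio t` and an ascent `i` sits between the terms `i` and `i + 1`. -/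
def ascCount (m : Fin (N + 1)) : ℕ := {i ∈ ascSet N t e | i.castSucc < m}.card

@[simp] lemma ascCount_zero : ascCount t e 0 = 0 := by
  simp [ascCount]

@[simp] lemma ascCount_last : ascCount t e (Fin.last N) = asc N t e := by
  simp [ascCount, asc, Fin.castSucc_lt_last]

lemma ascCount_succ (i : Fin N) :
    ascCount t e i.succ = ascCount t e i.castSucc + if i ∈ ascSet N t e then 1 else 0 := by
  have hsplit (k : Fin N) : k.castSucc < i.succ ↔ k.castSucc < i.castSucc ∨ k = i := by
    grind
  simp only [ascCount, hsplit, Finset.filter_or, Finset.filter_eq']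
  rw [Finset.card_union_of_disjoint]
  · split_ifs <;> simp
  · split_ifs <;> simp

lemma eq_ascCount_iff {l : Fin (N + 1) → ℤ} (hl : l 0 = 0) :
    (∀ m, l m = ascCount t e m) ↔
      ∀ i : Fin N, l i.succ = l i.castSucc + if i ∈ ascSet N t e then 1 else 0 := by
  constructor
  · intro h i
    rw [h, h, ascCount_succ]
    push_cast
    rfl
  · intro h m
    induction m using Fin.induction with
    | zero => simpa using hl
    | succ i ih => simp [h i, ih, ascCount_succ]

lemma sub_sub_sub_mem_Ico_iff {a b : ℝ} (ha : a ∈ Ico 0 1) (hb : b ∈ Ico 0 1) (k l : ℤ) :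
    (l - b) - (k - a) ∈ Ico 0 1 ↔ l = k + if a < b then 1 else 0 := by
  obtain ⟨ha0, ha1⟩ := ha
  obtain ⟨hb0, hb1⟩ := hb
  constructor
  · rintro ⟨hlower, hupper⟩
    split_ifs with hab
    · have hlt : (k : ℝ) < l := by linarith
      have hlt' : (l : ℝ) < k + 2 := by linarith
      norm_cast at hlt hlt'
      omega
    · have hlt : (k : ℝ) < l + 1 := by linarith
      have hlt' : (l : ℝ) < k + 1 := by linarith
      norm_cast at hlt hlt'
      omega
  · rintro rfl
    split_ifs with hab <;> push_cast <;> constructor <;> linarith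

lemma mul_sub_mem_box_iff (ht : ∀ i, 0 < t i) (he : IsInvSeq N t e) (l : Fin N → ℤ) :
    l * t - e ∈ box t ↔ ∀ i, l i = ascCount t e i.succ := by
  let l₀ : Fin (N + 1) → ℤ := Fin.cons 0 l
  have hratio (m : Fin (N + 1)) : ratio t (fun i => ((l * t - e) i : ℝ)) m =
      l₀ m - ratio t (fun i => (e i : ℝ)) m := by
    cases m using Fin.cases with
    | zero => simp [l₀]
    | succ i =>
      have hti : (t i : ℝ) ≠ 0 := mod_cast (ht i).ne'
      simp [l₀, sub_div, hti]
  calc l * t - e ∈ box t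
      ↔ ∀ i, latticeGap t (l * t - e) i ∈ Ico 0 1 := forall_and.symm
    _ ↔ ∀ i : Fin N, l₀ i.succ = l₀ i.castSucc + if i ∈ ascSet N t e then 1 else 0 := by
      simp only [latticeGap_eq, gap_apply, hratio, mem_ascSet_iff,
        sub_sub_sub_mem_Ico_iff (ratio_mem_Ico he _) (ratio_mem_Ico he _)]
    _ ↔ ∀ m, l₀ m = ascCount t e m := (eq_ascCount_iff rfl).symm
    _ ↔ ∀ i, l i = ascCount t e i.succ := by
      simp [Fin.forall_fin_succ, l₀]

variable (t e) in
/-- The point `ℓ_i t_i - e_i` with `ℓ_i` the number of ascents of `e` up to position `i`. For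
`t = (s, 1)` and `e = (e', 0)` this is the point `lamOf n s e'`. -/
def boxPoint : Fin N → ℤ := (fun i => (ascCount t e i.succ : ℤ)) * t - e

lemma boxPoint_apply (i : Fin N) : boxPoint t e i = ascCount t e i.succ * t i - e i := rfl

lemma neg_boxPoint_emod (he : IsInvSeq N t e) (i : Fin N) : -boxPoint t e i % t i = e i := by
  rw [boxPoint_apply, neg_sub, Int.sub_mul_emod_self_right, Int.emod_eq_of_lt (he i).1 (he i).2]

lemma bijOn_boxPoint (ht : ∀ i, 0 < t i) :
    BijOn (boxPoint t) {e | IsInvSeq N t e} (box t) := by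
  refine ⟨fun e he => (mul_sub_mem_box_iff ht he _).2 fun _ => rfl, ?_, ?_⟩
  · intro e he e' he' h
    funext i
    rw [← neg_boxPoint_emod he, h, neg_boxPoint_emod he']
  · intro x hx
    let e : Fin N → ℤ := fun i => -x i % t i
    let l : Fin N → ℤ := fun i => -(-x i / t i)
    have he : IsInvSeq N t e := fun i =>
      ⟨Int.emod_nonneg _ (ht i).ne', Int.emod_lt_of_pos _ (ht i)⟩
    have hxl : x = l * t - e := by
      funext i
      simp only [Pi.sub_apply, Pi.mul_apply, l, e]
      linarith [Int.emod_add_mul_ediv (-x i) (t i)]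
    have hl : l = fun i => (ascCount t e i.succ : ℤ) :=
      funext ((mul_sub_mem_box_iff ht he l).1 (hxl ▸ hx))
    exact ⟨e, he, by rw [hxl, hl, boxPoint]⟩

lemma finite_setOf_isInvSeq (t : Fin N → ℤ) : {e | IsInvSeq N t e}.Finite :=
  (Finite.pi' fun i => finite_Ico 0 (t i)).subset fun _ he => he

end InversionSequences

section Homogenization

variable {n : ℕ} (s : Fin n → ℤ)

/-- The sequence `(s_1, …, s_n, 1)`. The cone over the `s`-lecture hall polytope is the lecture
hall cone of this sequence, see `lhpCone_eq`. -/
def homogenize : Fin (n + 1) → ℤ := Fin.snoc s 1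

@[simp] lemma homogenize_castSucc (i : Fin n) : homogenize s i.castSucc = s i := by
  simp [homogenize]

@[simp] lemma homogenize_last : homogenize s (Fin.last n) = 1 := by
  simp [homogenize]

variable {s}

lemma homogenize_pos (hs : ∀ i, 0 < s i) (i : Fin (n + 1)) : 0 < homogenize s i := by
  cases i using Fin.lastCases <;> simp [hs]

lemma snoc_lhpVertexR (i : Fin n) : (Fin.snoc (lhpVertexR n s i) 1 : Fin (n + 1) → ℝ) =
    lhpVertexR (n + 1) (homogenize s) i.castSucc := by
  funext j
  cases j using Fin.lastCases <;> simp [lhpVertexR, Fin.le_last]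

lemma snoc_zero_eq_lhpVertexR_last : (Fin.snoc (0 : Fin n → ℝ) 1 : Fin (n + 1) → ℝ) =
    lhpVertexR (n + 1) (homogenize s) (Fin.last n) := by
  funext j
  cases j using Fin.lastCases <;> simp [lhpVertexR]

lemma lhpCone_eq (hs : ∀ i, 0 < s i) : lhpCone n s = {x | 0 ≤ gap (homogenize s) x} := by
  ext x
  simp only [lhpCone, mem_ofPred_eq, snoc_lhpVertexR, snoc_zero_eq_lhpVertexR_last (s := s)]
  constructor
  · rintro ⟨a, b, ha, hb, hx⟩
    rw [(gap_eq_iff (b := Fin.snoc b a) (homogenize_pos hs)).2]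
    · intro i
      cases i using Fin.lastCases <;> simp [ha, hb _]
    · simpa [Fin.sum_univ_castSucc, add_comm] using hx
  · intro hx
    refine ⟨gap (homogenize s) x (Fin.last n), fun i => gap (homogenize s) x i.castSucc,
      hx _, fun i => hx _, ?_⟩
    have hcoord := (gap_eq_iff (homogenize_pos hs)).1 (rfl : gap (homogenize s) x = _)
    rwa [Fin.sum_univ_castSucc, add_comm (∑ _, _)] at hcoord

lemma mem_lhpConeZ_iff (hs : ∀ i, 0 < s i) {x : Fin (n + 1) → ℤ} :
    x ∈ lhpConeZ n s ↔ 0 ≤ latticeGap (homogenize s) x := by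
  rw [lhpConeZ, lhpCone_eq hs]
  rfl

lemma mem_lhpConeInteriorZ_iff (hs : ∀ i, 0 < s i) {x : Fin (n + 1) → ℤ} :
    x ∈ lhpConeInteriorZ n s ↔ ∀ i, 0 < latticeGap (homogenize s) x i := by
  rw [lhpConeInteriorZ, lhpCone_eq hs, interior_nonneg_gap (homogenize_pos hs)]
  rfl

lemma last_nonneg_of_mem_lhpConeZ (hs : ∀ i, 0 < s i) {z : Fin (n + 1) → ℤ}
    (hz : z ∈ lhpConeZ n s) : 0 ≤ z (Fin.last n) := by
  rw [mem_lhpConeZ_iff hs, latticeGap_eq, ← monotone_ratio_iff] at hz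
  have hlast := hz (Fin.zero_le (Fin.last n).succ)
  rw [ratio_zero, ratio_succ, homogenize_last, Int.cast_one, div_one] at hlast
  exact_mod_cast hlast

lemma last_eq_zero_of_isInvSeq {e : Fin (n + 1) → ℤ} (he : IsInvSeq (n + 1) (homogenize s) e) :
    e (Fin.last n) = 0 := by
  have hlast := he (Fin.last n)
  rw [homogenize_last] at hlast
  omega

lemma isInvSeq_snoc_zero_iff {e : Fin n → ℤ} :
    IsInvSeq (n + 1) (homogenize s) (Fin.snoc e 0) ↔ IsInvSeq n s e := by
  simp [IsInvSeq, Fin.forall_fin_succ']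

lemma castSucc_mem_ascSet_iff {e : Fin n → ℤ} (i : Fin n) :
    i.castSucc ∈ ascSet (n + 1) (homogenize s) (Fin.snoc e 0) ↔ i ∈ ascSet n s e := by
  have hinv (k : Fin n) :
      invRatio (n + 1) (homogenize s) (Fin.snoc e 0) k.castSucc = invRatio n s e k := by
    simp [invRatio]
  have hprev : prevRatio (n + 1) (homogenize s) (Fin.snoc e 0) i.castSucc = prevRatio n s e i :=
    if_congr Iff.rfl rfl (hinv ⟨i - 1, by omega⟩)
  simp only [ascSet, Finset.mem_filter_univ, hinv, hprev]

lemma last_notMem_ascSet {e : Fin n → ℤ} (he : IsInvSeq n s e) :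
    Fin.last n ∉ ascSet (n + 1) (homogenize s) (Fin.snoc e 0) := by
  rw [mem_ascSet_iff, ratio_succ, Fin.snoc_last, Int.cast_zero, zero_div, not_lt]
  exact (ratio_mem_Ico (isInvSeq_snoc_zero_iff.2 he) _).1

lemma asc_snoc_zero {e : Fin n → ℤ} (he : IsInvSeq n s e) :
    asc (n + 1) (homogenize s) (Fin.snoc e 0) = asc n s e := by
  have himage : ascSet (n + 1) (homogenize s) (Fin.snoc e 0) =
      (ascSet n s e).map Fin.castSuccEmb := by
    ext i
    cases i using Fin.lastCases <;> simp [castSucc_mem_ascSet_iff, last_notMem_ascSet he]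
  rw [asc, himage, Finset.card_map, asc]

lemma hStar_homogenize (k : ℕ) : hStar (n + 1) (homogenize s) k = hStar n s k := by
  refine (Nat.card_congr (Equiv.ofBijective
    (fun e => ⟨Fin.snoc e.1 0, isInvSeq_snoc_zero_iff.2 e.2.1,
      (asc_snoc_zero e.2.1).trans e.2.2⟩) ⟨?_, ?_⟩)).symm
  · intro e e' h
    exact Subtype.ext (Fin.snoc_injective2 (α := fun _ => ℤ) (congrArg Subtype.val h)).1
  · rintro ⟨e, he, rfl⟩
    have hsnoc : Fin.snoc (Fin.init e) 0 = e := by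
      rw [← last_eq_zero_of_isInvSeq he, Fin.snoc_init_self]
    have hinit : IsInvSeq n s (Fin.init e) := isInvSeq_snoc_zero_iff.1 (hsnoc.symm ▸ he)
    exact ⟨⟨Fin.init e, hinit, by rw [← asc_snoc_zero hinit, hsnoc]⟩, Subtype.ext hsnoc⟩

variable (s) in
/-- The lattice points at height `k` of the half-open fundamental parallelepiped of the cone over
the `s`-lecture hall polytope. -/
def boxAt (k : ℕ) : Set (Fin (n + 1) → ℤ) := {x ∈ box (homogenize s) | x (Fin.last n) = k}

lemma boxPoint_last {e : Fin (n + 1) → ℤ} (he : IsInvSeq (n + 1) (homogenize s) e) :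
    boxPoint (homogenize s) e (Fin.last n) = asc (n + 1) (homogenize s) e := by
  simp [boxPoint_apply, last_eq_zero_of_isInvSeq he]

lemma bijOn_boxPoint_boxAt (hs : ∀ i, 0 < s i) (k : ℕ) :
    BijOn (boxPoint (homogenize s))
      {e | IsInvSeq (n + 1) (homogenize s) e ∧ asc (n + 1) (homogenize s) e = k} (boxAt s k) := by
  have hbij := bijOn_boxPoint (homogenize_pos hs)
  refine ⟨fun e he => ⟨hbij.mapsTo he.1, ?_⟩, hbij.injOn.mono fun e he => he.1, ?_⟩
  · rw [boxPoint_last he.1, he.2]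
  · rintro x ⟨hx, hxk⟩
    obtain ⟨e, he, rfl⟩ := hbij.surjOn hx
    exact ⟨e, ⟨he, by exact_mod_cast (boxPoint_last he).symm.trans hxk⟩, rfl⟩

lemma hStar_eq_ncard_boxAt (hs : ∀ i, 0 < s i) (k : ℕ) : hStar n s k = (boxAt s k).ncard := by
  rw [← hStar_homogenize, ← (bijOn_boxPoint_boxAt hs k).image_eq,
    (bijOn_boxPoint_boxAt hs k).injOn.ncard_image]
  rfl

lemma finite_boxAt (hs : ∀ i, 0 < s i) (k : ℕ) : (boxAt s k).Finite := by
  rw [← (bijOn_boxPoint_boxAt hs k).image_eq]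
  exact ((finite_setOf_isInvSeq _).subset fun _ he => he.1).image _

end Homogenization

section Level

variable {n : ℕ} {s : Fin n → ℤ}

lemma exists_completion_of_isLevel (hs : ∀ i, 0 < s i) (hlevel : IsLevel n s) :
    ∃ r : ℤ, ∀ x ∈ box (homogenize s), ∃ z ∈ lhpConeZ n s,
      x + z ∈ box (homogenize s) ∧ x (Fin.last n) + z (Fin.last n) = r := by
  obtain ⟨C, ⟨c₀, hc₀⟩, hheight, hunion⟩ := hlevel
  let v : Fin (n + 1) → ℤ := ∑ i, lhpVertexZ (n + 1) (homogenize s) i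
  have hv : latticeGap (homogenize s) v = 1 := latticeGap_sum_lhpVertexZ (homogenize_pos hs)
  refine ⟨v (Fin.last n) - c₀ (Fin.last n), fun x hx => ?_⟩
  have hvx : v - x ∈ lhpConeInteriorZ n s := by
    rw [mem_lhpConeInteriorZ_iff hs, map_sub, hv]
    exact fun i => sub_pos.2 (hx.2 i)
  simp only [← hunion, mem_iUnion₂, mem_image] at hvx
  obtain ⟨c, hc, z, hz, hcz⟩ := hvx
  have hcint : c ∈ lhpConeInteriorZ n s := by
    rw [← hunion, mem_iUnion₂]
    exact ⟨c, hc, 0, by simp [mem_lhpConeZ_iff hs], add_zero c⟩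
  have hxz : x + z = v - c := by
    rw [eq_sub_iff_add_eq, add_assoc, add_comm z, hcz, add_sub_cancel]
  refine ⟨z, hz, ⟨?_, fun i => ?_⟩, ?_⟩
  · rw [map_add]
    exact add_nonneg hx.1 ((mem_lhpConeZ_iff hs).1 hz)
  · rw [hxz, map_sub, hv]
    exact sub_lt_self 1 ((mem_lhpConeInteriorZ_iff hs).1 hcint i)
  · rw [← Pi.add_apply, hxz, Pi.sub_apply, hheight c hc c₀ hc₀]

lemma exists_add_mem_boxAt_of_isLevel (hs : ∀ i, 0 < s i) (hlevel : IsLevel n s) {i j : ℕ}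
    {x y : Fin (n + 1) → ℤ} (hx : x ∈ boxAt s i) (hy : y ∈ boxAt s (i + j)) :
    ∃ f ∈ boxAt s j, x + f ∈ boxAt s (i + j) := by
  obtain ⟨hx, hxi⟩ := hx
  obtain ⟨hy, hyij⟩ := hy
  obtain ⟨r, hr⟩ := exists_completion_of_isLevel hs hlevel
  obtain ⟨w, hw, -, hyw⟩ := hr y hy
  obtain ⟨z, hz, hxz, hxzr⟩ := hr x hx
  have hw_nonneg := last_nonneg_of_mem_lhpConeZ hs hw
  have hz_nonneg := (mem_lhpConeZ_iff hs).1 hz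
  let f := truncate (homogenize s) j z
  have hf_nonneg : 0 ≤ latticeGap (homogenize s) f :=
    latticeGap_truncate_nonneg (homogenize_pos hs) j hz_nonneg
  have hf_le : latticeGap (homogenize s) f ≤ latticeGap (homogenize s) z :=
    latticeGap_truncate_le (homogenize_pos hs) j hz_nonneg
  have hf_last : f (Fin.last n) = j := by
    simp only [f, truncate, homogenize_last]
    omega
  refine ⟨f, ⟨mem_box_of_le hxz hf_nonneg ?_, hf_last⟩, mem_box_of_le hxz ?_ ?_, ?_⟩
  · rw [map_add]
    exact hf_le.trans (le_add_of_nonneg_left hx.1)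
  · rw [map_add]
    exact add_nonneg hx.1 hf_nonneg
  · rw [map_add, map_add]
    gcongr
  · rw [Pi.add_apply, hxi, hf_last, Nat.cast_add]

end Level

end LectureHall

theorem level_hStar_inequalities (n : ℕ) (s : Fin n → ℤ)
    (hs : ∀ i, 0 < s i) (hlevel : IsLevel n s) :
    ∀ i j : ℕ, 0 < hStar n s (i + j) →
      hStar n s i ≤ hStar n s j * hStar n s (i + j) := by
  intro i j hpos
  simp only [LectureHall.hStar_eq_ncard_boxAt hs] at hpos ⊢
  obtain ⟨y, hy⟩ := Set.nonempty_of_ncard_ne_zero hpos.ne'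
  choose! f hfj hfij using fun x (hx : x ∈ LectureHall.boxAt s i) =>
    LectureHall.exists_add_mem_boxAt_of_isLevel hs hlevel hx hy
  have hfinite := (LectureHall.finite_boxAt hs j).prod (LectureHall.finite_boxAt hs (i + j))
  rw [← Set.ncard_prod]
  refine Set.ncard_le_ncard_of_injOn (fun x => (f x, x + f x))
    (fun x hx => ⟨hfj x hx, hfij x hx⟩) ?_ hfinite
  intro x _ x' _ h
  obtain ⟨hfst, hsnd⟩ := Prod.mk.inj h
  exact add_right_cancel (hfst ▸ hsnd)
end

section
/- For every pair of positive integers (s_1, s_2), the two-dimensional lecture hall polytope P_2^{(s_1,s_2)} is level. -/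
open scoped BigOperators

/-!
Put `t = (s, 1)`. In terms of the quotients `x_j / t_j` the cone over the polytope consists of the
sequences `0 ≤ x_0 / t_0 ≤ ⋯ ≤ x_n / t_n`: the increments are the coefficients of the generators.
Its interior is cut out by the strict inequalities. For levelness it suffices that every interior
lattice point which is not of minimal height becomes an interior lattice point of smaller height on
subtracting some lattice point of the cone.

In dimension two, subtract from the interior point `(x, y, z)` one of `(0, 0, 1)`, `(s₁, s₂, 1)`
and `(x - 1, s₂, 1)` if the result is still interior. If it never is, let `y = m` be the lowest row
containing an interior lattice point of the cone over `0 ≤ x / s₁ ≤ y / s₂`; it meets the interior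
at every height at which there are interior lattice points. The result of the subtraction is then
the interior lattice point `(a, m, z - 1)` of that row with `a ≤ x` as large as possible.
-/

section PartialSums

variable {n : ℕ}

theorem sum_Iic_fin_succ {M : Type*} [AddCommMonoid M] (c : Fin (n + 1) → M) (i : Fin n) :
    ∑ k ∈ Finset.Iic i.succ, c k = ∑ k ∈ Finset.Iic i.castSucc, c k + c i.succ := by
  have hIio : Finset.Iio i.succ = Finset.Iic i.castSucc := by
    ext k
    simp [Fin.le_castSucc_iff]
  rw [← Finset.sum_Iio_add_eq_sum_Iic, hIio]

theorem exists_nonneg_eq_sum_Iic_iff {G : Type*} [AddCommGroup G] [PartialOrder G]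
    [IsOrderedAddMonoid G] {f : Fin (n + 1) → G} :
    (∃ c : Fin (n + 1) → G, (∀ i, 0 ≤ c i) ∧ ∀ j, f j = ∑ i ∈ Finset.Iic j, c i) ↔
      0 ≤ f 0 ∧ ∀ i : Fin n, f i.castSucc ≤ f i.succ := by
  constructor
  · rintro ⟨c, hc, hf⟩
    refine ⟨(hf 0).symm ▸ Finset.sum_nonneg fun i _ ↦ hc i, fun i ↦ ?_⟩
    rw [hf, hf, sum_Iic_fin_succ]
    exact le_add_of_nonneg_right (hc _)
  · rintro ⟨h0, hf⟩
    refine ⟨Fin.cons (f 0) fun i ↦ f i.succ - f i.castSucc,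
      Fin.cases h0 fun i ↦ by simpa using hf i, Fin.induction ?_ fun i ih ↦ ?_⟩
    · simp [show Finset.Iic (0 : Fin (n + 1)) = {0} from Finset.Iic_bot]
    · rw [sum_Iic_fin_succ, ← ih, Fin.cons_succ, add_sub_cancel]

end PartialSums

section Facets

variable {n : ℕ}

theorem mem_lhCone_succ_iff {t : Fin (n + 1) → ℤ} {x : Fin (n + 1) → ℝ} :
    x ∈ lhCone (n + 1) t ↔
      0 ≤ x 0 / t 0 ∧ ∀ i : Fin n, x i.castSucc / t i.castSucc ≤ x i.succ / t i.succ := by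
  refine and_congr ⟨fun h ↦ h 0 rfl, fun h i hi ↦ (Fin.ext hi : i = 0) ▸ h⟩
    ⟨fun h i ↦ h _ _ (by simp), fun h i j hij ↦ ?_⟩
  obtain ⟨k, rfl⟩ : ∃ k : Fin n, k.succ = j := Fin.exists_succ_eq.2 fun hj ↦ by simp [hj] at hij
  obtain rfl : i = k.castSucc := Fin.ext (by simpa using hij.symm)
  exact h k

theorem interior_lhCone {t : Fin (n + 1) → ℤ} (ht : ∀ i, t i ≠ 0) :
    interior (lhCone (n + 1) t) =
      {x : Fin (n + 1) → ℝ | 0 < x 0 / t 0 ∧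
        ∀ i : Fin n, x i.castSucc / t i.castSucc < x i.succ / t i.succ} := by
  apply Set.Subset.antisymm
  · intro x hx
    -- The quotients of `v` are `1, 2, …, n + 1`, so `v` is strictly inside every facet.
    let v : Fin (n + 1) → ℝ := fun i ↦ t i * ((i : ℕ) + 1)
    have hcont : Continuous fun ε : ℝ ↦ x - ε • v := by fun_prop
    have hmem : ∀ᶠ ε in nhds (0 : ℝ), x - ε • v ∈ lhCone (n + 1) t :=
      hcont.continuousAt.eventually_mem (by simpa using mem_interior_iff_mem_nhds.1 hx)
    obtain ⟨ε, hε, hεpos : 0 < ε⟩ :=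
      ((hmem.filter_mono nhdsWithin_le_nhds).and
        (self_mem_nhdsWithin : Set.Ioi (0 : ℝ) ∈ nhdsWithin 0 (Set.Ioi 0))).exists
    have hquot (i : Fin (n + 1)) : (x - ε • v) i / t i = x i / t i - ε * ((i : ℕ) + 1) := by
      have : (t i : ℝ) ≠ 0 := mod_cast ht i
      simp only [Pi.sub_apply, Pi.smul_apply, smul_eq_mul, v]
      field_simp
    simp only [mem_lhCone_succ_iff, hquot, Fin.val_zero, Fin.val_castSucc, Fin.val_succ,
      Nat.cast_zero, Nat.cast_add, Nat.cast_one] at hε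
    exact ⟨by linarith [hε.1], fun i ↦ by linarith [hε.2 i]⟩
  · refine interior_maximal (fun x hx ↦ mem_lhCone_succ_iff.2 ⟨hx.1.le, fun i ↦ (hx.2 i).le⟩) ?_
    simp only [Set.ofPred_and, Set.ofPred_forall]
    exact (isOpen_lt (by fun_prop) (by fun_prop)).inter
      (isOpen_iInter_of_finite fun i ↦ isOpen_lt (by fun_prop) (by fun_prop))

theorem mem_lhpCone_iff_exists_sum_Iic {s : Fin n → ℤ} {x : Fin (n + 1) → ℝ} :
    x ∈ lhpCone n s ↔ ∃ c : Fin (n + 1) → ℝ, (∀ i, 0 ≤ c i) ∧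
      ∀ j, x j = (Fin.snoc s 1 : Fin (n + 1) → ℤ) j * ∑ i ∈ Finset.Iic j, c i := by
  have hcoord (a : ℝ) (b : Fin n → ℝ) (j : Fin (n + 1)) :
      (a • (Fin.snoc (0 : Fin n → ℝ) 1 : Fin (n + 1) → ℝ) +
        ∑ i : Fin n, b i • (Fin.snoc (lhpVertexR n s i) 1 : Fin (n + 1) → ℝ)) j =
      (Fin.snoc s 1 : Fin (n + 1) → ℤ) j *
        ∑ i ∈ Finset.Iic j, (Fin.snoc b a : Fin (n + 1) → ℝ) i := by
    refine Fin.lastCases ?_ (fun j ↦ ?_) j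
    · have hIic : Finset.Iic (Fin.last n) = Finset.univ := Finset.Iic_top
      simp [hIic, Fin.sum_univ_castSucc, add_comm]
    · simp [Fin.sum_Iic_castSucc, lhpVertexR, Finset.sum_mul, ← Finset.sum_filter,
        Finset.filter_ge_eq_Iic, mul_comm (s j : ℝ)]
  constructor
  · rintro ⟨a, b, ha, hb, rfl⟩
    exact ⟨Fin.snoc b a, Fin.lastCases (by simpa) (by simpa), hcoord a b⟩
  · rintro ⟨c, hc, hx⟩
    refine ⟨c (Fin.last n), Fin.init c, hc _, fun i ↦ hc _, funext fun j ↦ ?_⟩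
    rw [hcoord, Fin.snoc_init_self, hx]

theorem lhpCone_eq_lhCone {s : Fin n → ℤ} (hs : ∀ i, s i ≠ 0) :
    lhpCone n s = lhCone (n + 1) (Fin.snoc s 1) := by
  have ht (j : Fin (n + 1)) : ((Fin.snoc s 1 : Fin (n + 1) → ℤ) j : ℝ) ≠ 0 := by
    refine Fin.lastCases ?_ (fun i ↦ ?_) j <;> simp [hs]
  ext x
  rw [mem_lhCone_succ_iff, mem_lhpCone_iff_exists_sum_Iic,
    ← exists_nonneg_eq_sum_Iic_iff (f := fun j ↦ x j / (Fin.snoc s 1 : Fin (n + 1) → ℤ) j)]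
  simp only [div_eq_iff (ht _), mul_comm]

end Facets

section Level

variable {n : ℕ} {s : Fin n → ℤ}

theorem add_mem_lhpCone {x y : Fin (n + 1) → ℝ} (hx : x ∈ lhpCone n s) (hy : y ∈ lhpCone n s) :
    x + y ∈ lhpCone n s := by
  rw [mem_lhpCone_iff_exists_sum_Iic] at *
  obtain ⟨c, hc, hxc⟩ := hx
  obtain ⟨d, hd, hyd⟩ := hy
  refine ⟨c + d, fun i ↦ add_nonneg (hc i) (hd i), fun j ↦ ?_⟩
  simp only [Pi.add_apply, hxc, hyd, Finset.sum_add_distrib, mul_add]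

theorem abs_le_abs_mul_last_of_mem_lhpCone {x : Fin (n + 1) → ℝ} (hx : x ∈ lhpCone n s)
    (j : Fin (n + 1)) :
    |x j| ≤ |((Fin.snoc s 1 : Fin (n + 1) → ℤ) j : ℝ)| * x (Fin.last n) := by
  obtain ⟨c, hc, hxc⟩ := mem_lhpCone_iff_exists_sum_Iic.1 hx
  have hnonneg (k : Fin (n + 1)) : 0 ≤ ∑ i ∈ Finset.Iic k, c i := Finset.sum_nonneg fun i _ ↦ hc i
  have hlast : x (Fin.last n) = ∑ i ∈ Finset.Iic (Fin.last n), c i := by simp [hxc]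
  rw [hlast, hxc j, abs_mul, abs_of_nonneg (hnonneg j)]
  gcongr
  · exact fun i _ _ ↦ hc i
  · exact Fin.le_last j

theorem last_nonneg_of_mem_lhpConeZ {x : Fin (n + 1) → ℤ} (hx : x ∈ lhpConeZ n s) :
    0 ≤ x (Fin.last n) := by
  have := (abs_nonneg _).trans (abs_le_abs_mul_last_of_mem_lhpCone hx (Fin.last n))
  simpa using this

theorem zero_mem_lhpConeZ : (0 : Fin (n + 1) → ℤ) ∈ lhpConeZ n s :=
  mem_lhpCone_iff_exists_sum_Iic.2 ⟨0, by simp, by simp⟩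

theorem add_mem_lhpConeZ {x y : Fin (n + 1) → ℤ} (hx : x ∈ lhpConeZ n s)
    (hy : y ∈ lhpConeZ n s) : x + y ∈ lhpConeZ n s := by
  simpa [lhpConeZ, Pi.add_def] using add_mem_lhpCone hx hy

theorem lhpConeInteriorZ_subset_lhpConeZ : lhpConeInteriorZ n s ⊆ lhpConeZ n s :=
  fun _ hx ↦ interior_subset (s := lhpCone n s) hx

open scoped Pointwise in
theorem add_mem_lhpConeInteriorZ {x y : Fin (n + 1) → ℤ} (hx : x ∈ lhpConeInteriorZ n s)
    (hy : y ∈ lhpConeZ n s) : x + y ∈ lhpConeInteriorZ n s := by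
  have hsum : lhpCone n s + lhpCone n s ⊆ lhpCone n s :=
    Set.add_subset_iff.2 fun _ hx _ hy ↦ add_mem_lhpCone hx hy
  have := interior_mono hsum (subset_interior_add_left (Set.add_mem_add hx hy))
  simpa [lhpConeInteriorZ, Pi.add_def] using this

theorem finite_lhpConeZ_inter_last_eq (k : ℤ) :
    {x ∈ lhpConeZ n s | x (Fin.last n) = k}.Finite := by
  let t : Fin (n + 1) → ℤ := Fin.snoc s 1
  refine (Set.finite_Icc (fun j ↦ -(|t j| * k)) fun j ↦ |t j| * k).subset ?_
  rintro x ⟨hx, rfl⟩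
  have hbound (j : Fin (n + 1)) : |x j| ≤ |t j| * x (Fin.last n) := by
    exact_mod_cast abs_le_abs_mul_last_of_mem_lhpCone hx j
  exact ⟨fun j ↦ (abs_le.1 (hbound j)).1, fun j ↦ (abs_le.1 (hbound j)).2⟩

theorem exists_forall_last_le_of_nonempty (hne : (lhpConeInteriorZ n s).Nonempty) :
    ∃ y ∈ lhpConeInteriorZ n s, ∀ x ∈ lhpConeInteriorZ n s, y (Fin.last n) ≤ x (Fin.last n) := by
  obtain ⟨y, hy, hmin⟩ := (measure fun x ↦ (x (Fin.last n)).toNat).wf.has_min _ hne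
  refine ⟨y, hy, fun x hx ↦ ?_⟩
  have hx_nonneg := last_nonneg_of_mem_lhpConeZ (lhpConeInteriorZ_subset_lhpConeZ hx)
  have hle : ¬ (x (Fin.last n)).toNat < (y (Fin.last n)).toNat := hmin x hx
  lia

theorem exists_last_eq_sub_mem_lhpConeZ_of_descent {k : ℤ}
    (hk : ∀ x ∈ lhpConeInteriorZ n s, k ≤ x (Fin.last n))
    (hdescent : ∀ x ∈ lhpConeInteriorZ n s, k < x (Fin.last n) →
      ∃ c ∈ lhpConeInteriorZ n s, c (Fin.last n) < x (Fin.last n) ∧ x - c ∈ lhpConeZ n s)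
    {x : Fin (n + 1) → ℤ} (hx : x ∈ lhpConeInteriorZ n s) :
    ∃ c ∈ lhpConeInteriorZ n s, c (Fin.last n) = k ∧ x - c ∈ lhpConeZ n s := by
  induction h : (x (Fin.last n) - k).toNat using Nat.strong_induction_on generalizing x with
  | _ m ih =>
    obtain heq | hlt := (hk x hx).eq_or_lt
    · exact ⟨x, hx, heq.symm, by simpa using zero_mem_lhpConeZ⟩
    · obtain ⟨c, hc, hcx, hxc⟩ := hdescent x hx hlt
      obtain ⟨d, hd, hdk, hcd⟩ := ih _ (by omega) hc rfl
      exact ⟨d, hd, hdk, by simpa using add_mem_lhpConeZ hxc hcd⟩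

theorem isLevel_of_descent (hne : (lhpConeInteriorZ n s).Nonempty)
    (hdescent : ∀ x ∈ lhpConeInteriorZ n s,
      (∃ y ∈ lhpConeInteriorZ n s, y (Fin.last n) < x (Fin.last n)) →
      ∃ c ∈ lhpConeInteriorZ n s, c (Fin.last n) < x (Fin.last n) ∧ x - c ∈ lhpConeZ n s) :
    IsLevel n s := by
  obtain ⟨y, hy, hmin⟩ := exists_forall_last_le_of_nonempty hne
  have hfin : {x ∈ lhpConeInteriorZ n s | x (Fin.last n) = y (Fin.last n)}.Finite :=
    (finite_lhpConeZ_inter_last_eq _).subset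
      (Set.inter_subset_inter_left _ lhpConeInteriorZ_subset_lhpConeZ)
  refine ⟨hfin.toFinset, ⟨y, by simpa using hy⟩, fun c hc c' hc' ↦ ?_, ?_⟩
  · rw [hfin.mem_toFinset] at hc hc'
    exact hc.2.trans hc'.2.symm
  · apply Set.Subset.antisymm
    · simp only [Set.iUnion_subset_iff, Set.image_subset_iff, hfin.mem_toFinset]
      exact fun c hc z hz ↦ add_mem_lhpConeInteriorZ hc.1 hz
    · intro x hx
      obtain ⟨c, hc, hck, hxc⟩ := exists_last_eq_sub_mem_lhpConeZ_of_descent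
        hmin (fun x hx hlt ↦ hdescent x hx ⟨y, hy, hlt⟩) hx
      simp only [Set.mem_iUnion, hfin.mem_toFinset]
      exact ⟨c, ⟨hc, hck⟩, x - c, hxc, add_sub_cancel c x⟩

end Level

section DimensionTwo

theorem snoc_vec_two {α : Type*} (a b c : α) :
    (Fin.snoc ![a, b] c : Fin 3 → α) = ![a, b, c] := by
  ext i
  fin_cases i <;> rfl

theorem mem_lhpConeZ_two_iff {s₁ s₂ : ℤ} (h₁ : 0 < s₁) (h₂ : 0 < s₂) {p : Fin 3 → ℤ} :
    p ∈ lhpConeZ 2 ![s₁, s₂] ↔ 0 ≤ p 0 ∧ s₂ * p 0 ≤ s₁ * p 1 ∧ p 1 ≤ s₂ * p 2 := by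
  have hs : ∀ i, ![s₁, s₂] i ≠ 0 := by simp [Fin.forall_fin_two, h₁.ne', h₂.ne']
  have hp₁ : (0 : ℝ) < s₁ := mod_cast h₁
  have hp₂ : (0 : ℝ) < s₂ := mod_cast h₂
  change (fun i ↦ (p i : ℝ)) ∈ lhpCone 2 _ ↔ _
  rw [lhpCone_eq_lhCone hs, snoc_vec_two, mem_lhCone_succ_iff, Fin.forall_fin_two]
  refine and_congr ?_ (and_congr ?_ ?_)
  · simp [le_div_iff₀ hp₁]
  · change (p 0 : ℝ) / s₁ ≤ p 1 / s₂ ↔ _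
    rw [div_le_div_iff₀ hp₁ hp₂, mul_comm, mul_comm (p 1 : ℝ)]
    norm_cast
  · change (p 1 : ℝ) / s₂ ≤ p 2 / (1 : ℤ) ↔ _
    rw [Int.cast_one, div_one, div_le_iff₀' hp₂]
    norm_cast

theorem mem_lhpConeInteriorZ_two_iff {s₁ s₂ : ℤ} (h₁ : 0 < s₁) (h₂ : 0 < s₂) {p : Fin 3 → ℤ} :
    p ∈ lhpConeInteriorZ 2 ![s₁, s₂] ↔ 0 < p 0 ∧ s₂ * p 0 < s₁ * p 1 ∧ p 1 < s₂ * p 2 := by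
  have hs : ∀ i, ![s₁, s₂] i ≠ 0 := by simp [Fin.forall_fin_two, h₁.ne', h₂.ne']
  have ht : ∀ i, ![s₁, s₂, 1] i ≠ 0 := by simp [Fin.forall_fin_succ, h₁.ne', h₂.ne']
  have hp₁ : (0 : ℝ) < s₁ := mod_cast h₁
  have hp₂ : (0 : ℝ) < s₂ := mod_cast h₂
  change (fun i ↦ (p i : ℝ)) ∈ interior (lhpCone 2 _) ↔ _
  rw [lhpCone_eq_lhCone hs, snoc_vec_two, interior_lhCone ht, Set.mem_ofPred_eq,
    Fin.forall_fin_two]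
  refine and_congr ?_ (and_congr ?_ ?_)
  · simp [lt_div_iff₀ hp₁]
  · change (p 0 : ℝ) / s₁ < p 1 / s₂ ↔ _
    rw [div_lt_div_iff₀ hp₁ hp₂, mul_comm, mul_comm (p 1 : ℝ)]
    norm_cast
  · change (p 1 : ℝ) / s₂ < p 2 / (1 : ℤ) ↔ _
    rw [Int.cast_one, div_one, div_lt_iff₀' hp₂]
    norm_cast

theorem isLeast_setOf_lt_mul {a : ℤ} (ha : 0 < a) (b : ℤ) :
    IsLeast {m | b < a * m} (b / a + 1) := by
  have h (m : ℤ) : b / a + 1 ≤ m ↔ b < a * m := by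
    rw [Int.add_one_le_iff, Int.ediv_lt_iff_lt_mul ha, mul_comm]
  exact ⟨(h _).1 le_rfl, fun m ↦ (h m).2⟩

theorem isGreatest_setOf_mul_lt {a : ℤ} (ha : 0 < a) (b : ℤ) :
    IsGreatest {q | a * q < b} ((b - 1) / a) := by
  have h (q : ℤ) : q ≤ (b - 1) / a ↔ a * q < b := by
    rw [Int.le_ediv_iff_mul_le ha, Int.le_sub_one_iff, mul_comm]
  exact ⟨(h _).1 le_rfl, fun q ↦ (h q).2⟩

theorem exists_split_in_lowest_row {s₁ s₂ x y m : ℤ} (h₂ : 0 < s₂) (hx : 0 < x) (hxs : x ≤ s₁)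
    (hxy : s₂ * x < s₁ * y) (hys : s₂ ≤ y) (hmy : m ≤ y) (hm : IsLeast {m | s₂ < s₁ * m} m) :
    ∃ a, 0 < a ∧ a ≤ x ∧ s₂ * a < s₁ * m ∧ s₂ * (x - a) ≤ s₁ * (y - m) := by
  have h₁ : 0 < s₁ := hx.trans_le hxs
  have hm_mem : s₂ < s₁ * m := hm.1
  have hm_pred : s₁ * (m - 1) ≤ s₂ := not_lt.1 fun h ↦ absurd (hm.2 h) (by lia)
  obtain ⟨q, hq⟩ : ∃ q, IsGreatest {q | s₂ * q < s₁ * m} q := ⟨_, isGreatest_setOf_mul_lt h₂ _⟩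
  have hq_mem : s₂ * q < s₁ * m := hq.1
  have hq_succ : s₁ * m ≤ s₂ * (q + 1) := not_lt.1 fun h ↦ absurd (hq.2 h) (by lia)
  have hq_pos : 1 ≤ q := hq.2 (by simpa using hm_mem)
  obtain hxq | hqx := le_or_gt x q
  · refine ⟨x, hx, le_rfl, (mul_le_mul_of_nonneg_left hxq h₂.le).trans_lt hq_mem, ?_⟩
    simpa using mul_nonneg h₁.le (sub_nonneg.2 hmy)
  · refine ⟨q, hq_pos, hqx.le, hq_mem, ?_⟩
    obtain rfl | hxs' := hxs.eq_or_lt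
    · have hy : s₂ + 1 ≤ y := lt_of_mul_lt_mul_left (by linarith) h₁.le
      calc s₂ * (x - q) ≤ s₂ * (x - 1) := mul_le_mul_of_nonneg_left (by lia) h₂.le
        _ ≤ x * (s₂ + 1) - x * m := by linarith
        _ ≤ x * y - x * m := by gcongr
        _ = x * (y - m) := by ring
    · have hx_succ : s₂ * (x + 1) ≤ s₁ * y :=
        (mul_comm _ _).trans_le (mul_le_mul hxs' hys h₂.le h₁.le)
      calc s₂ * (x - q) = s₂ * (x + 1) - s₂ * (q + 1) := by ring
        _ ≤ s₁ * y - s₁ * m := sub_le_sub hx_succ hq_succ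
        _ = s₁ * (y - m) := by ring

theorem exists_last_lt_sub_mem_lhpConeZ_two {s₁ s₂ : ℤ} (h₁ : 0 < s₁) (h₂ : 0 < s₂)
    {p q : Fin 3 → ℤ}
    (hp : p ∈ lhpConeInteriorZ 2 ![s₁, s₂]) (hq : q ∈ lhpConeInteriorZ 2 ![s₁, s₂])
    (hqp : q 2 < p 2) :
    ∃ c ∈ lhpConeInteriorZ 2 ![s₁, s₂], c 2 < p 2 ∧ p - c ∈ lhpConeZ 2 ![s₁, s₂] := by
  simp only [mem_lhpConeInteriorZ_two_iff h₁ h₂, mem_lhpConeZ_two_iff h₁ h₂] at hp hq ⊢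
  obtain ⟨hx, hxy, hyz⟩ := hp
  obtain ⟨hu, huv, hvw⟩ := hq
  suffices ∃ a b, (0 < a ∧ s₂ * a < s₁ * b ∧ b < s₂ * (p 2 - 1)) ∧
      a ≤ p 0 ∧ s₂ * (p 0 - a) ≤ s₁ * (p 1 - b) ∧ p 1 - b ≤ s₂ by
    obtain ⟨a, b, hc, hd⟩ := this
    exact ⟨![a, b, p 2 - 1], hc, by simp, by simpa using hd⟩
  obtain hy | hy := lt_or_ge (p 1) (s₂ * (p 2 - 1))
  · exact ⟨p 0, p 1, ⟨hx, hxy, hy⟩, by lia, by simp, by lia⟩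
  obtain hxs | hxs := lt_or_ge s₁ (p 0)
  · exact ⟨p 0 - s₁, p 1 - s₂, ⟨by lia, by linarith, by linarith⟩, by lia, by linarith, by lia⟩
  obtain hys | hys := lt_or_ge s₂ (s₁ * (p 1 - s₂))
  · exact ⟨1, p 1 - s₂, ⟨one_pos, by linarith, by linarith⟩, by lia, by nlinarith, by lia⟩
  obtain ⟨m, hm⟩ : ∃ m, IsLeast {m | s₂ < s₁ * m} m := ⟨_, isLeast_setOf_lt_mul h₁ s₂⟩
  have hm_mem : s₂ < s₁ * m := hm.1
  have hm_le : m ≤ q 1 := hm.2 ((le_mul_of_one_le_right h₂.le hu).trans_lt huv)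
  have hm_lt : m < s₂ * (p 2 - 1) :=
    calc m ≤ q 1 := hm_le
      _ < s₂ * q 2 := hvw
      _ ≤ s₂ * (p 2 - 1) := mul_le_mul_of_nonneg_left (by lia) h₂.le
  have hm_pos : 0 < m := pos_of_mul_pos_right (h₂.trans hm_mem) h₁.le
  have hs₂_le : s₂ ≤ p 1 :=
    (le_mul_of_one_le_right h₂.le (pos_of_mul_pos_right (hm_pos.trans hm_lt) h₂.le)).trans hy
  have hlt_m : p 1 - s₂ < m := lt_of_mul_lt_mul_left (hys.trans_lt hm_mem) h₁.le
  obtain ⟨a, ha, hax, haI, haC⟩ :=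
    exists_split_in_lowest_row h₂ hx hxs hxy hs₂_le (hm_lt.le.trans hy) hm
  exact ⟨a, m, ⟨ha, haI, hm_lt⟩, hax, haC, by lia⟩

end DimensionTwo

theorem lhp_dim_two_level (s₁ s₂ : ℤ) (h₁ : 0 < s₁) (h₂ : 0 < s₂) :
    IsLevel 2 ![s₁, s₂] := by
  apply isLevel_of_descent
  · have hlt : s₂ * 1 < s₁ * (s₂ + 1) := by nlinarith
    have hlt' : s₂ + 1 < s₂ * 3 := by lia
    exact ⟨![1, s₂ + 1, 3], (mem_lhpConeInteriorZ_two_iff h₁ h₂).2 ⟨one_pos, hlt, hlt'⟩⟩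
  · rintro p hp ⟨q, hq, hqp⟩
    exact exists_last_lt_sub_mem_lhpConeZ_two h₁ h₂ hp hq hqp
end
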